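/- Let 𝓑 be an admissible W-orbit of sets of mutually orthogonal positive roots with unique maximal element B₀ and let B ∈ 𝓑. (i) If w ∈ W is of minimal length with B = w·B₀ and i is a node with ℓ(r_i w) < ℓ(w), then r_i·B > B. (ii) If w, w' ∈ W are both of minimal length with B = w·B₀ = w'·B₀, then ℓ(w) = ℓ(w'), and for each node i with r_i·B > B there exists w'' ∈ W with ℓ(w'') = ℓ(w), B = w''·B₀ and ℓ(r_i w'') < ℓ(w''). -/

import Mathlib

/-!
Write `d(B)` for the distance of `B` from `B₀` in the graph on the orbit whose edges are the
fundamental reflections. A minimal `w` with `w · B₀ = B` has length `d(B)`, so both assertions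
follow once `r i · B > B` is shown to be equivalent to `d(r i · B) = d(B) - 1`.

* Say that `i` raises `B` (`SLRS.Up`) if some `β ∈ B` with `⟪β, α i⟫ = -1` is strictly lower
  than every `γ ∈ B` with `⟪γ, α i⟫ = 1`. Since no root has height `0`, such `β, γ` differ in
  height by at least `2` (`IsOrthoSet.gap`). This makes raising equivalent to `B < r i · B`
  (`IsOrthoSet.lt_iff`), and `B` and `r i · B` are always comparable
  (`IsOrthoSet.trichotomy`).
* Raising is terminating (`wf_up`) and locally confluent with completing paths of equal length
  (`diamond`). For orthogonal `α i`, `α j` the square closes unless `B` contains some `γ` and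
  `γ + α i + α j`, in which case admissibility gives `r i · B = r j · B`. For adjacent nodes
  the braid hexagon always closes (`IsOrthoSet.hexagon`), because two members of `B` orthogonal
  to `α j`, one raised and the other lowered by `r i`, with the raised one the lower of the
  two, differ in height by at least `3` (`IsOrthoSet.gap3`).
* By Newman's argument all ascending paths from `B` end in `B₀` and have the same length `ρ(B)`
  (`asc_unique`, `exists_asc_max`). Hence `ρ` drops by exactly one along every raising edge,
  and every other edge fixes `ρ` or raises it by one, so `ρ = d`.
-/

open scoped InnerProductSpace

/-- A finite crystallographic simply laced root system `Φ` in a real inner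
product space, normalized so that `⟪β, β⟫ = 2` for all roots, together with a
fixed base `α 1, …, α n` (the nodes of the diagram `M`), the corresponding set
`Pos` of positive roots, and the height linear functional `ht`. -/
structure SLRS (V : Type) [NormedAddCommGroup V] [InnerProductSpace ℝ V] where
  /-- the number of nodes of the diagram -/
  n : ℕ
  /-- the set of roots -/
  Φ : Set V
  /-- the set of positive roots -/
  Pos : Set V
  /-- the simple roots -/
  α : Fin n → V
  /-- the height functional: heights are sums of coefficients on simple roots -/
  ht : V →ₗ[ℝ] ℝ
  finite : Φ.Finite
  pos_subset : Pos ⊆ Φ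
  mem_pos_or_neg : ∀ β ∈ Φ, β ∈ Pos ∨ -β ∈ Pos
  not_pos_and_neg : ∀ β ∈ Pos, -β ∉ Pos
  alpha_pos : ∀ i, α i ∈ Pos
  norm_two : ∀ β ∈ Φ, ⟪β, β⟫_ℝ = 2
  inner_int : ∀ β ∈ Φ, ∀ γ ∈ Φ, ∃ z : ℤ, ⟪β, γ⟫_ℝ = (z : ℝ)
  reflect_mem : ∀ β ∈ Φ, ∀ γ ∈ Φ, β - ⟪β, γ⟫_ℝ • γ ∈ Φ
  reduced : ∀ β ∈ Φ, ∀ t : ℝ, t • β ∈ Φ → t = 1 ∨ t = -1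
  pos_coeff : ∀ β ∈ Pos, ∃ a : Fin n → ℕ, β = ∑ i, (a i : ℝ) • α i
  ht_alpha : ∀ i, ht (α i) = 1

namespace SLRS

variable {V : Type} [NormedAddCommGroup V] [InnerProductSpace ℝ V] (S : SLRS V)

/-- Adjacency of two nodes of the diagram: `i ∼ j` iff `⟪α i, α j⟫ = -1`. -/
def adj (i j : Fin S.n) : Prop := ⟪S.α i, S.α j⟫_ℝ = -1

/-- The reflection along a root `δ` (normalized so that `⟪δ, δ⟫ = 2`). -/
def reflRoot (δ : V) : V → V := fun v => v - ⟪v, δ⟫_ℝ • δ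

/-- The fundamental reflection `r i`. -/
def refl (i : Fin S.n) : V → V := reflRoot (S.α i)

/-- A set of mutually orthogonal positive roots. -/
def IsOrthoSet (B : Set V) : Prop :=
  B ⊆ S.Pos ∧ ∀ β ∈ B, ∀ γ ∈ B, β ≠ γ → ⟪β, γ⟫_ℝ = 0

/-- The action of a map `w` on a set `B` of positive roots:
`w·B = Φ⁺ ∩ {± w β : β ∈ B}`. -/
def mapSet (w : V → V) (B : Set V) : Set V :=
  {x ∈ S.Pos | ∃ β ∈ B, w β = x ∨ w β = -x}

/-- The action of the fundamental reflection `r i` on a set of positive roots. -/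
def rAct (i : Fin S.n) (B : Set V) : Set V := S.mapSet (S.refl i) B

/-- The action of the reflection along a root `δ` on a set of positive roots. -/
def reflAct (δ : V) (B : Set V) : Set V := S.mapSet (reflRoot δ) B

/-- The `W`-orbit of `B`, `W` being generated by the fundamental reflections. -/
def orbitOf (B : Set V) : Set (Set V) :=
  {C | Relation.ReflTransGen (fun X Y => ∃ i, Y = S.rAct i X) B C}

/-- `𝓑` is a `W`-orbit of sets of mutually orthogonal positive roots. -/
def IsOrbit (𝓑 : Set (Set V)) : Prop :=
  ∃ B, S.IsOrthoSet B ∧ 𝓑 = S.orbitOf B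

/-- Admissibility of a `W`-orbit of sets of mutually orthogonal positive roots. -/
def Admissible (𝓑 : Set (Set V)) : Prop :=
  S.IsOrbit 𝓑 ∧ ∀ B ∈ 𝓑, ∀ i j : Fin S.n, i ≠ j → ¬ S.adj i j →
    (∃ γ, γ ∈ B ∧ γ - S.α i + S.α j ∈ B) → S.rAct i B = S.rAct j B

/-- The height order: `B < C` iff `B ≠ C` and the minimal height of an element
of `B \ C` is smaller than the minimal height of an element of `C \ B`. -/
def lt (B C : Set V) : Prop :=
  B ≠ C ∧ sInf (⇑S.ht '' (B \ C)) < sInf (⇑S.ht '' (C \ B))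

/-- The map `V → V` determined by the word `l = [i₁, …, iₛ]`,
namely `r i₁ ∘ r i₂ ∘ ⋯ ∘ r iₛ`. -/
def wordMap (l : List (Fin S.n)) : V → V := l.foldr (fun i f => S.refl i ∘ f) id

/-- A map belongs to the Weyl group `W` iff it is realized by a word in the
fundamental reflections. -/
def InW (w : V → V) : Prop := ∃ l : List (Fin S.n), S.wordMap l = w

/-- The Coxeter length of an element of `W`: the minimal length of a word in
the fundamental reflections representing it. -/
noncomputable def len (w : V → V) : ℕ :=
  sInf {k | ∃ l : List (Fin S.n), l.length = k ∧ S.wordMap l = w}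

/-- The action of `w ∈ W` on a set of positive roots. -/
def wAct (w : V → V) (B : Set V) : Set V := S.mapSet w B

/-- `r i₁ · (r i₂ · ⋯ (r iₛ · B))` for the word `l = [i₁, …, iₛ]`. -/
def suffixAct (l : List (Fin S.n)) (B : Set V) : Set V := l.foldr S.rAct B

/-- The chain `B > r iₛ · B > r iₛ₋₁ r iₛ · B > ⋯ > r i₁ ⋯ r iₛ · B` obtained by
successively applying the letters of the word `l = [i₁, …, iₛ]` to `B` is
strictly descending at every step. -/
def DescChain (l : List (Fin S.n)) (B : Set V) : Prop :=
  ∀ k < l.length, S.lt (S.suffixAct (l.drop k) B) (S.suffixAct (l.drop (k + 1)) B)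

end SLRS

open SLRS

variable {V : Type} [NormedAddCommGroup V] [InnerProductSpace ℝ V]

namespace SLRS

/-! ### Roots, heights and simple reflections -/

section basic

variable (S : SLRS V)

lemma alpha_mem (i : Fin S.n) : S.α i ∈ S.Φ := S.pos_subset (S.alpha_pos i)

lemma neg_mem {β : V} (hβ : β ∈ S.Φ) : -β ∈ S.Φ := by
  have h := S.reflect_mem β hβ β hβ
  rw [S.norm_two β hβ] at h
  convert h using 1
  module

lemma inner_cases {β γ : V} (hβ : β ∈ S.Φ) (hγ : γ ∈ S.Φ) :
    β = γ ∨ β = -γ ∨ ⟪β, γ⟫_ℝ = -1 ∨ ⟪β, γ⟫_ℝ = 0 ∨ ⟪β, γ⟫_ℝ = 1 := by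
  by_cases h1 : β = γ
  · exact Or.inl h1
  by_cases h2 : β = -γ
  · exact Or.inr (Or.inl h2)
  right; right
  obtain ⟨z, hz⟩ := S.inner_int β hβ γ hγ
  have hb := S.norm_two β hβ
  have hg := S.norm_two γ hγ
  have p1 : 0 < ⟪β - γ, β - γ⟫_ℝ := real_inner_self_pos.2 (sub_ne_zero.2 h1)
  have p2 : 0 < ⟪β + γ, β + γ⟫_ℝ :=
    real_inner_self_pos.2 (fun h => h2 (eq_neg_of_add_eq_zero_left h))
  rw [real_inner_sub_sub_self] at p1
  rw [real_inner_add_add_self] at p2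
  rw [hz] at p1 p2 ⊢
  have q1 : (z : ℝ) < 2 := by linarith
  have q2 : (-2 : ℝ) < z := by linarith
  have q1' : z < 2 := by exact_mod_cast q1
  have q2' : -2 < z := by exact_mod_cast q2
  have : z = -1 ∨ z = 0 ∨ z = 1 := by omega
  rcases this with h | h | h <;> simp [h]

lemma sub_mem {β γ : V} (hβ : β ∈ S.Φ) (hγ : γ ∈ S.Φ) (h : ⟪β, γ⟫_ℝ = 1) :
    β - γ ∈ S.Φ := by
  simpa [h] using S.reflect_mem β hβ γ hγ

lemma add_mem {β γ : V} (hβ : β ∈ S.Φ) (hγ : γ ∈ S.Φ) (h : ⟪β, γ⟫_ℝ = -1) :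
    β + γ ∈ S.Φ := by
  simpa [h] using S.reflect_mem β hβ γ hγ

lemma ht_pos {β : V} (hβ : β ∈ S.Pos) : ∃ n : ℕ, 1 ≤ n ∧ S.ht β = n ∧
    (n = 1 → ∃ k, β = S.α k) := by
  obtain ⟨a, ha⟩ := S.pos_coeff β hβ
  refine ⟨∑ i, a i, ?_, ?_, ?_⟩
  · by_contra hn
    have h0 : ∑ i, a i = 0 := by omega
    have hz : ∀ i, a i = 0 := fun i => Finset.sum_eq_zero_iff.1 h0 i (Finset.mem_univ i)
    have h2 := S.norm_two β (S.pos_subset hβ)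
    rw [ha] at h2
    simp [hz] at h2
  · rw [ha, map_sum]
    simp [S.ht_alpha]
  · intro h1
    obtain ⟨k, -, hk⟩ : ∃ k ∈ Finset.univ, a k ≠ 0 := by
      by_contra! hcon
      rw [Finset.sum_eq_zero hcon] at h1
      omega
    refine ⟨k, ?_⟩
    have hs := Finset.add_sum_erase Finset.univ a (Finset.mem_univ k)
    have hk1 : a k = 1 := by omega
    have hr : ∑ x ∈ Finset.univ.erase k, a x = 0 := by omega
    rw [ha, ← Finset.add_sum_erase Finset.univ _ (Finset.mem_univ k), hk1,
      Finset.sum_eq_zero (s := Finset.univ.erase k)]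
    · simp
    · intro x hx
      simp [Finset.sum_eq_zero_iff.1 hr x hx]

lemma ht_int {β : V} (hβ : β ∈ S.Φ) : ∃ z : ℤ, z ≠ 0 ∧ S.ht β = z := by
  rcases S.mem_pos_or_neg β hβ with h | h
  · obtain ⟨n, h1, h2, -⟩ := S.ht_pos h
    exact ⟨n, by omega, by simp [h2]⟩
  · obtain ⟨n, h1, h2, -⟩ := S.ht_pos h
    refine ⟨-n, by omega, ?_⟩
    rw [map_neg] at h2
    push_cast
    linarith

lemma ht_ne_zero {β : V} (hβ : β ∈ S.Φ) : S.ht β ≠ 0 := by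
  obtain ⟨z, hz, h⟩ := S.ht_int hβ
  rw [h]
  exact_mod_cast hz

lemma ht_lt {β γ : V} (hβ : β ∈ S.Φ) (hγ : γ ∈ S.Φ) (h : S.ht β < S.ht γ) :
    S.ht β + 1 ≤ S.ht γ := by
  obtain ⟨z, -, hz⟩ := S.ht_int hβ
  obtain ⟨y, -, hy⟩ := S.ht_int hγ
  rw [hz, hy] at h ⊢
  exact_mod_cast h

lemma pos_of_ht {β : V} (hβ : β ∈ S.Φ) (h : 0 ≤ S.ht β) : β ∈ S.Pos := by
  rcases S.mem_pos_or_neg β hβ with h' | h'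
  · exact h'
  · obtain ⟨n, h1, h2, -⟩ := S.ht_pos h'
    rw [map_neg] at h2
    have : (1 : ℝ) ≤ n := by exact_mod_cast h1
    linarith

lemma simple_of_ht {β : V} (hβ : β ∈ S.Φ) (h : S.ht β = 1) : ∃ k, β = S.α k := by
  obtain ⟨n, -, h2, h3⟩ := S.ht_pos (S.pos_of_ht hβ (by rw [h]; norm_num))
  exact h3 (by rw [h] at h2; exact_mod_cast h2.symm)

/-- Distinct simple roots have inner product `0` or `-1`: otherwise their difference would be
a root of height `0`. -/
lemma simple_inner (i k : Fin S.n) :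
    S.α i = S.α k ∨ ⟪S.α i, S.α k⟫_ℝ = -1 ∨ ⟪S.α i, S.α k⟫_ℝ = 0 := by
  rcases S.inner_cases (S.alpha_mem i) (S.alpha_mem k) with h | h | h | h | h
  · exact Or.inl h
  · exact absurd (h ▸ S.alpha_pos i) (S.not_pos_and_neg _ (S.alpha_pos k))
  · exact Or.inr (Or.inl h)
  · exact Or.inr (Or.inr h)
  · have := S.ht_ne_zero (S.sub_mem (S.alpha_mem i) (S.alpha_mem k) h)
    simp [S.ht_alpha] at this

lemma inner_pos_cases {β : V} (hβ : β ∈ S.Pos) (i : Fin S.n) (hne : β ≠ S.α i) :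
    ⟪β, S.α i⟫_ℝ = -1 ∨ ⟪β, S.α i⟫_ℝ = 0 ∨ ⟪β, S.α i⟫_ℝ = 1 := by
  rcases S.inner_cases (S.pos_subset hβ) (S.alpha_mem i) with h | h | h
  · exact absurd h hne
  · exact absurd (h ▸ hβ) (S.not_pos_and_neg _ (S.alpha_pos i))
  · exact h

lemma alpha_inner_self (i : Fin S.n) : ⟪S.α i, S.α i⟫_ℝ = 2 := S.norm_two _ (S.alpha_mem i)

lemma refl_apply (i : Fin S.n) (v : V) : S.refl i v = v - ⟪v, S.α i⟫_ℝ • S.α i := rfl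

lemma refl_neg (i : Fin S.n) (v : V) : S.refl i (-v) = -S.refl i v := by
  simp only [refl_apply, inner_neg_left]
  module

lemma refl_refl (i : Fin S.n) (v : V) : S.refl i (S.refl i v) = v := by
  simp only [refl_apply, inner_sub_left, real_inner_smul_left, S.alpha_inner_self]
  module

lemma inner_refl (i : Fin S.n) (v x : V) :
    ⟪S.refl i v, x⟫_ℝ = ⟪v, x⟫_ℝ - ⟪v, S.α i⟫_ℝ * ⟪S.α i, x⟫_ℝ := by
  rw [refl_apply, inner_sub_left, real_inner_smul_left]

lemma inner_refl_refl (i : Fin S.n) (v x : V) :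
    ⟪S.refl i v, S.refl i x⟫_ℝ = ⟪v, x⟫_ℝ := by
  rw [inner_refl, refl_apply]
  simp only [inner_sub_right, real_inner_smul_right, S.alpha_inner_self]
  rw [real_inner_comm (S.α i) x]
  ring

lemma ht_refl (i : Fin S.n) (v : V) : S.ht (S.refl i v) = S.ht v - ⟪v, S.α i⟫_ℝ := by
  rw [refl_apply, map_sub, map_smul, S.ht_alpha]
  simp

lemma refl_mem (i : Fin S.n) {β : V} (hβ : β ∈ S.Φ) : S.refl i β ∈ S.Φ :=
  S.reflect_mem β hβ _ (S.alpha_mem i)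

lemma refl_alpha (i : Fin S.n) : S.refl i (S.α i) = -S.α i := by
  rw [refl_apply, S.alpha_inner_self]
  module

/-- `r i` permutes the positive roots other than `α i`. -/
lemma refl_pos (i : Fin S.n) {β : V} (hβ : β ∈ S.Pos) (hne : β ≠ S.α i) :
    S.refl i β ∈ S.Pos := by
  apply S.pos_of_ht (S.refl_mem i (S.pos_subset hβ))
  rw [ht_refl]
  obtain ⟨n, h1, h2, -⟩ := S.ht_pos hβ
  have : (1 : ℝ) ≤ n := by exact_mod_cast h1
  rcases S.inner_pos_cases hβ i hne with h | h | h <;> rw [h, h2] <;> linarith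

lemma refl_braid {i j : Fin S.n} (h : ⟪S.α i, S.α j⟫_ℝ = -1) (v : V) :
    S.refl i (S.refl j (S.refl i v)) = S.refl j (S.refl i (S.refl j v)) := by
  have h' : ⟪S.α j, S.α i⟫_ℝ = -1 := by rw [real_inner_comm, h]
  simp only [refl_apply, inner_sub_left, real_inner_smul_left, S.alpha_inner_self, h, h']
  module

lemma refl_comm {i j : Fin S.n} (h : ⟪S.α i, S.α j⟫_ℝ = 0) (v : V) :
    S.refl i (S.refl j v) = S.refl j (S.refl i v) := by
  have h' : ⟪S.α j, S.α i⟫_ℝ = 0 := by rw [real_inner_comm, h]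
  simp only [refl_apply, inner_sub_left, real_inner_smul_left, h, h']
  module

/-! ### The action on sets of positive roots -/

lemma mapSet_id {B : Set V} (hB : B ⊆ S.Pos) : S.mapSet id B = B := by
  ext x
  constructor
  · rintro ⟨hx, β, hβ, h | h⟩
    · exact h ▸ hβ
    · have h' : β = -x := h
      exact absurd (h' ▸ hB hβ) (S.not_pos_and_neg _ hx)
  · intro hx
    exact ⟨hB hx, x, hx, Or.inl rfl⟩

lemma mapSet_refl_mapSet (i : Fin S.n) {w : V → V} {B : Set V} (hB : B ⊆ S.Pos)
    (hw : ∀ β ∈ S.Φ, w β ∈ S.Φ) :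
    S.mapSet (S.refl i) (S.mapSet w B) = S.mapSet (S.refl i ∘ w) B := by
  ext x
  constructor
  · rintro ⟨hx, y, ⟨hy, β, hβ, h⟩, h'⟩
    refine ⟨hx, β, hβ, ?_⟩
    simp only [Function.comp]
    rcases h with h | h
    · rw [h]; exact h'
    · rw [h, refl_neg]
      rcases h' with h' | h' <;> rw [h'] <;> simp
  · rintro ⟨hx, β, hβ, h⟩
    simp only [Function.comp] at h
    rcases S.mem_pos_or_neg _ (hw β (S.pos_subset (hB hβ))) with h' | h'
    · exact ⟨hx, w β, ⟨h', β, hβ, Or.inl rfl⟩, h⟩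
    · refine ⟨hx, -w β, ⟨h', β, hβ, Or.inr (by simp)⟩, ?_⟩
      rw [refl_neg]
      rcases h with h | h <;> rw [h] <;> simp

lemma wordMap_cons (i : Fin S.n) (l : List (Fin S.n)) :
    S.wordMap (i :: l) = S.refl i ∘ S.wordMap l := rfl

lemma wordMap_mem (l : List (Fin S.n)) {β : V} (hβ : β ∈ S.Φ) : S.wordMap l β ∈ S.Φ := by
  induction l with
  | nil => exact hβ
  | cons i l ih =>
    rw [wordMap_cons]
    exact S.refl_mem i ih

lemma wAct_cons {B : Set V} (hB : B ⊆ S.Pos) (i : Fin S.n) (l : List (Fin S.n)) :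
    S.wAct (S.wordMap (i :: l)) B = S.rAct i (S.wAct (S.wordMap l) B) :=
  (S.mapSet_refl_mapSet i hB (fun _ h => S.wordMap_mem l h)).symm

variable {S}

lemma IsOrthoSet.rAct_of_mem {B : Set V} (hB : S.IsOrthoSet B) {i : Fin S.n}
    (hi : S.α i ∈ B) : S.rAct i B = B := by
  have key : ∀ β ∈ B, β ≠ S.α i → S.refl i β = β := by
    intro β hβ hne
    rw [refl_apply, hB.2 β hβ _ hi hne]
    simp
  ext x
  constructor
  · rintro ⟨hx, β, hβ, h⟩
    by_cases hne : β = S.α i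
    · rw [hne, refl_alpha] at h
      rcases h with h | h
      · exact absurd (h ▸ hx) (S.not_pos_and_neg _ (S.alpha_pos i))
      · rw [← neg_injective h]; exact hi
    · rw [key β hβ hne] at h
      rcases h with h | h
      · exact h ▸ hβ
      · exact absurd (h ▸ hB.1 hβ) (S.not_pos_and_neg _ hx)
  · intro hx
    by_cases hne : x = S.α i
    · exact ⟨hB.1 hx, x, hx, Or.inr (by rw [hne, refl_alpha])⟩
    · exact ⟨hB.1 hx, x, hx, Or.inl (key x hx hne)⟩

lemma IsOrthoSet.rAct_of_not_mem {B : Set V} (hB : S.IsOrthoSet B) {i : Fin S.n}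
    (hi : S.α i ∉ B) : S.rAct i B = S.refl i '' B := by
  ext x
  constructor
  · rintro ⟨hx, β, hβ, h | h⟩
    · exact ⟨β, hβ, h⟩
    · have := S.refl_pos i (hB.1 hβ) (fun h' => hi (h' ▸ hβ))
      exact absurd (h ▸ this) (S.not_pos_and_neg _ hx)
  · rintro ⟨β, hβ, rfl⟩
    exact ⟨S.refl_pos i (hB.1 hβ) (fun h' => hi (h' ▸ hβ)), β, hβ, Or.inl rfl⟩

lemma IsOrthoSet.rAct {B : Set V} (hB : S.IsOrthoSet B) (i : Fin S.n) :
    S.IsOrthoSet (S.rAct i B) := by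
  by_cases hi : S.α i ∈ B
  · rwa [hB.rAct_of_mem hi]
  · refine ⟨fun x hx => hx.1, ?_⟩
    rw [hB.rAct_of_not_mem hi]
    rintro _ ⟨β, hβ, rfl⟩ _ ⟨γ, hγ, rfl⟩ hne
    rw [inner_refl_refl]
    exact hB.2 β hβ γ hγ (fun h => hne (by rw [h]))

lemma IsOrthoSet.rAct_rAct {B : Set V} (hB : S.IsOrthoSet B) (i : Fin S.n) :
    S.rAct i (S.rAct i B) = B := by
  have h1 : S.rAct i (S.rAct i B) = S.mapSet (S.refl i ∘ S.refl i) B :=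
    S.mapSet_refl_mapSet i hB.1 (fun _ h => S.refl_mem i h)
  have h2 : S.refl i ∘ S.refl i = id := funext (S.refl_refl i)
  rw [h1, h2, S.mapSet_id hB.1]

lemma IsOrthoSet.finite {B : Set V} (hB : S.IsOrthoSet B) : B.Finite :=
  S.finite.subset (hB.1.trans S.pos_subset)

lemma IsOrthoSet.inner_cases {B : Set V} (hB : S.IsOrthoSet B) {i : Fin S.n}
    (hi : S.α i ∉ B) {β : V} (hβ : β ∈ B) :
    ⟪β, S.α i⟫_ℝ = -1 ∨ ⟪β, S.α i⟫_ℝ = 0 ∨ ⟪β, S.α i⟫_ℝ = 1 :=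
  S.inner_pos_cases (hB.1 hβ) i (fun h => hi (h ▸ hβ))

/-- A member of `B` moved by `r i` leaves `B`, because `⟪β, r i β⟫ = 1`. -/
lemma IsOrthoSet.refl_not_mem {B : Set V} (hB : S.IsOrthoSet B) {i : Fin S.n} {β : V}
    (hβ : β ∈ B) (h : ⟪β, S.α i⟫_ℝ = -1 ∨ ⟪β, S.α i⟫_ℝ = 1) : S.refl i β ∉ B := by
  intro hm
  have hne : S.refl i β ≠ β := by
    intro he
    have h1 := congrArg S.ht he
    rw [ht_refl] at h1
    rcases h with h | h <;> rw [h] at h1 <;> linarith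
  have h0 := hB.2 _ hm _ hβ hne
  rw [inner_refl, real_inner_comm β (S.α i), S.norm_two β (S.pos_subset (hB.1 hβ))] at h0
  rcases h with h | h <;> rw [h] at h0 <;> norm_num at h0

/-! ### Raising reflections -/

variable (S) in
/-- The node `i` raises `B`: some member of `B` that goes up under `r i` (inner product `-1`
with `α i`) lies strictly below every member that goes down (inner product `1`). For
orthogonal sets this is `B < r i · B`, see `IsOrthoSet.lt_iff`. -/
def Up (i : Fin S.n) (B : Set V) : Prop :=
  ∃ β ∈ B, ⟪β, S.α i⟫_ℝ = -1 ∧ ∀ γ ∈ B, ⟪γ, S.α i⟫_ℝ = 1 → S.ht β < S.ht γ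

lemma up_image {i j : Fin S.n} {B : Set V} : S.Up i (S.refl j '' B) ↔
    ∃ β ∈ B, ⟪S.refl j β, S.α i⟫_ℝ = -1 ∧ ∀ γ ∈ B, ⟪S.refl j γ, S.α i⟫_ℝ = 1 →
      S.ht (S.refl j β) < S.ht (S.refl j γ) := by
  simp [Up]

lemma Up.not_mem {B : Set V} (hB : S.IsOrthoSet B) {i : Fin S.n} (h : S.Up i B) :
    S.α i ∉ B := by
  obtain ⟨β, hβ, h1, -⟩ := h
  intro hi
  have hne : β ≠ S.α i := by
    rintro rfl
    rw [alpha_inner_self] at h1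
    norm_num at h1
  rw [hB.2 β hβ _ hi hne] at h1
  norm_num at h1

/-- If `ht γ = ht β + 1`, then `γ - α i - β` would be a root of height `0`. -/
lemma IsOrthoSet.gap {B : Set V} (hB : S.IsOrthoSet B) {i : Fin S.n} {β γ : V}
    (hβ : β ∈ B) (hγ : γ ∈ B) (h1 : ⟪β, S.α i⟫_ℝ = -1) (h2 : ⟪γ, S.α i⟫_ℝ = 1)
    (h : S.ht β < S.ht γ) : S.ht β + 2 ≤ S.ht γ := by
  have hβ' := S.pos_subset (hB.1 hβ)
  have hγ' := S.pos_subset (hB.1 hγ)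
  have hr := S.sub_mem hγ' (S.alpha_mem i) h2
  have hort : ⟪γ, β⟫_ℝ = 0 := hB.2 γ hγ β hβ (by rintro rfl; linarith)
  have hr2 := S.sub_mem hr hβ' (by
    rw [inner_sub_left, hort, real_inner_comm β (S.α i), h1]; norm_num)
  have hle := S.ht_lt hβ' hγ' h
  by_contra hcon
  push Not at hcon
  -- `ht γ - 1` is the height of the root `γ - α i`, so `ht γ < ht β + 2` forces equality.
  have h3 : S.ht (γ - S.α i) = S.ht β := by
    by_contra hne
    have hht : S.ht (γ - S.α i) = S.ht γ - 1 := by rw [map_sub, S.ht_alpha]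
    have := S.ht_lt hβ' hr (lt_of_le_of_ne (by linarith) (Ne.symm hne))
    linarith
  apply S.ht_ne_zero hr2
  rw [map_sub, h3, sub_self]

/-- If `ht γ = ht β + 2`, then `γ = β + α i + α k` for a simple root `α k`, and pairing with
`α j` gives `⟪α k, α j⟫ = 1`, which is impossible for simple roots. -/
lemma IsOrthoSet.gap3 {B : Set V} (hB : S.IsOrthoSet B) {i j : Fin S.n}
    (hij : ⟪S.α i, S.α j⟫_ℝ = -1) {β γ : V}
    (hβ : β ∈ B) (hγ : γ ∈ B) (h1 : ⟪β, S.α i⟫_ℝ = -1) (h2 : ⟪γ, S.α i⟫_ℝ = 1)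
    (h3 : ⟪β, S.α j⟫_ℝ = 0) (h4 : ⟪γ, S.α j⟫_ℝ = 0)
    (h : S.ht β < S.ht γ) : S.ht β + 3 ≤ S.ht γ := by
  have hβ' := S.pos_subset (hB.1 hβ)
  have hγ' := S.pos_subset (hB.1 hγ)
  have hr := S.sub_mem hγ' (S.alpha_mem i) h2
  have hort : ⟪γ, β⟫_ℝ = 0 := hB.2 γ hγ β hβ (by rintro rfl; linarith)
  have hr2 := S.sub_mem hr hβ' (by
    rw [inner_sub_left, hort, real_inner_comm β (S.α i), h1]; norm_num)
  have hle := hB.gap hβ hγ h1 h2 h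
  have hne : S.ht β + 2 ≠ S.ht γ := by
    intro he
    obtain ⟨k, hk⟩ := S.simple_of_ht hr2 (by
      rw [map_sub, map_sub, S.ht_alpha]; linarith)
    have hkj : ⟪S.α k, S.α j⟫_ℝ = 1 := by
      rw [← hk, inner_sub_left, inner_sub_left, h3, h4, hij]; norm_num
    rcases S.simple_inner k j with h' | h' | h'
    · rw [h', alpha_inner_self] at hkj; norm_num at hkj
    · rw [h'] at hkj; norm_num at hkj
    · rw [h'] at hkj; norm_num at hkj
  have hht : S.ht (γ - S.α i) = S.ht γ - 1 := by rw [map_sub, S.ht_alpha]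
  have hadd : S.ht (β + S.α i) = S.ht β + 1 := by rw [map_add, S.ht_alpha]
  have := S.ht_lt (S.add_mem hβ' (S.alpha_mem i) h1) hr
    (by rw [hht, hadd]; have := lt_of_le_of_ne hle hne; linarith)
  have h5 : S.ht β + 2 < S.ht γ := lt_of_le_of_ne hle hne
  linarith

lemma IsOrthoSet.rAct_eq_self {B : Set V} (hB : S.IsOrthoSet B) {i : Fin S.n}
    (h0 : ∀ β ∈ B, ⟪β, S.α i⟫_ℝ = 0) : S.rAct i B = B := by
  have hi : S.α i ∉ B := fun h => by
    have := h0 _ h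
    rw [alpha_inner_self] at this
    norm_num at this
  rw [hB.rAct_of_not_mem hi]
  have : ∀ β ∈ B, S.refl i β = β := fun β hβ => by simp [refl_apply, h0 β hβ]
  rw [Set.image_congr this, Set.image_id']

lemma IsOrthoSet.diff_left {B : Set V} (hB : S.IsOrthoSet B) {i : Fin S.n}
    (hi : S.α i ∉ B) {x : V} :
    x ∈ B \ S.rAct i B ↔ x ∈ B ∧ (⟪x, S.α i⟫_ℝ = -1 ∨ ⟪x, S.α i⟫_ℝ = 1) := by
  rw [hB.rAct_of_not_mem hi]
  constructor
  · rintro ⟨hx, hn⟩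
    refine ⟨hx, ?_⟩
    rcases hB.inner_cases hi hx with h | h | h
    · exact Or.inl h
    · exact absurd ⟨x, hx, by simp [refl_apply, h]⟩ hn
    · exact Or.inr h
  · rintro ⟨hx, h⟩
    refine ⟨hx, ?_⟩
    rintro ⟨y, hy, rfl⟩
    exact hB.refl_not_mem hx h (by rwa [refl_refl])

lemma IsOrthoSet.diff_right {B : Set V} (hB : S.IsOrthoSet B) {i : Fin S.n}
    (hi : S.α i ∉ B) {x : V} :
    x ∈ S.rAct i B \ B ↔
      ∃ y ∈ B, (⟪y, S.α i⟫_ℝ = -1 ∨ ⟪y, S.α i⟫_ℝ = 1) ∧ S.refl i y = x := by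
  rw [hB.rAct_of_not_mem hi]
  constructor
  · rintro ⟨⟨y, hy, rfl⟩, hn⟩
    refine ⟨y, hy, ?_, rfl⟩
    rcases hB.inner_cases hi hy with h | h | h
    · exact Or.inl h
    · exact absurd (by simpa [refl_apply, h] using hy) hn
    · exact Or.inr h
  · rintro ⟨y, hy, h, rfl⟩
    exact ⟨⟨y, hy, rfl⟩, hB.refl_not_mem hy h⟩

/-- For orthogonal sets, `B < r i · B` means precisely that `i` raises `B`. -/
lemma IsOrthoSet.lt_iff {B : Set V} (hB : S.IsOrthoSet B) (i : Fin S.n) :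
    S.lt B (S.rAct i B) ↔ S.Up i B := by
  have fin1 : (⇑S.ht '' (B \ S.rAct i B)).Finite := (hB.finite.sdiff).image _
  have fin2 : (⇑S.ht '' (S.rAct i B \ B)).Finite := ((hB.rAct i).finite.sdiff).image _
  constructor
  · rintro ⟨hne, hlt⟩
    have hi : S.α i ∉ B := fun h => hne (hB.rAct_of_mem h).symm
    have hex : ∃ β ∈ B, ⟪β, S.α i⟫_ℝ ≠ 0 := by
      by_contra! h
      exact hne (hB.rAct_eq_self h).symm
    obtain ⟨β₁, hβ₁, h₁⟩ := hex
    have ne1 : (⇑S.ht '' (B \ S.rAct i B)).Nonempty := by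
      refine ⟨_, β₁, (hB.diff_left hi).2 ⟨hβ₁, ?_⟩, rfl⟩
      have := hB.inner_cases hi hβ₁
      tauto
    obtain ⟨β, hβ, he⟩ := ne1.csInf_mem fin1
    rw [← he] at hlt
    have key : ∀ γ ∈ B, (⟪γ, S.α i⟫_ℝ = -1 ∨ ⟪γ, S.α i⟫_ℝ = 1) →
        S.ht β < S.ht γ - ⟪γ, S.α i⟫_ℝ := by
      intro γ hγ h
      rw [← ht_refl]
      exact hlt.trans_le
        (csInf_le fin2.bddBelow ⟨_, (hB.diff_right hi).2 ⟨γ, hγ, h, rfl⟩, rfl⟩)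
    obtain ⟨hβB, hβi⟩ := (hB.diff_left hi).1 hβ
    refine ⟨β, hβB, ?_, ?_⟩
    · have := key β hβB hβi
      rcases hβi with h | h
      · exact h
      · rw [h] at this; linarith
    · intro γ hγ h
      have := key γ hγ (Or.inr h)
      rw [h] at this
      linarith
  · intro hup
    have hi := hup.not_mem hB
    obtain ⟨β, hβ, h1, h2⟩ := hup
    have hβd : β ∈ B \ S.rAct i B := (hB.diff_left hi).2 ⟨hβ, Or.inl h1⟩
    refine ⟨fun he => hβd.2 (he ▸ hβ), ?_⟩
    have ne2 : (⇑S.ht '' (S.rAct i B \ B)).Nonempty :=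
      ⟨_, _, (hB.diff_right hi).2 ⟨β, hβ, Or.inl h1, rfl⟩, rfl⟩
    obtain ⟨x, hx, he⟩ := ne2.csInf_mem fin2
    rw [← he]
    obtain ⟨γ, hγ, h, rfl⟩ := (hB.diff_right hi).1 hx
    rw [ht_refl]
    rcases h with h | h
    · have := csInf_le fin1.bddBelow ⟨γ, (hB.diff_left hi).2 ⟨hγ, Or.inl h⟩, rfl⟩
      rw [h]; linarith
    · have := csInf_le fin1.bddBelow ⟨β, hβd, rfl⟩
      have := hB.gap hβ hγ h1 h (h2 γ hγ h)
      rw [h]; linarith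

/-- `B` and `r i · B` are always comparable. -/
lemma IsOrthoSet.trichotomy {B : Set V} (hB : S.IsOrthoSet B) (i : Fin S.n) :
    S.rAct i B = B ∨ S.Up i B ∨ S.Up i (S.rAct i B) := by
  by_cases hi : S.α i ∈ B
  · exact Or.inl (hB.rAct_of_mem hi)
  by_cases h0 : ∀ β ∈ B, ⟪β, S.α i⟫_ℝ = 0
  · exact Or.inl (hB.rAct_eq_self h0)
  right
  by_cases hup : S.Up i B
  · exact Or.inl hup
  right
  have hn : ∀ β ∈ B, ⟪β, S.α i⟫_ℝ = -1 → ∃ γ ∈ B, ⟪γ, S.α i⟫_ℝ = 1 ∧ S.ht γ ≤ S.ht β := by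
    intro β hβ h
    by_contra! hcon
    exact hup ⟨β, hβ, h, hcon⟩
  have hne : {γ | γ ∈ B ∧ ⟪γ, S.α i⟫_ℝ = 1}.Nonempty := by
    push Not at h0
    obtain ⟨β, hβ, hb⟩ := h0
    rcases hB.inner_cases hi hβ with h | h | h
    · obtain ⟨γ, hγ, h', -⟩ := hn β hβ h
      exact ⟨γ, hγ, h'⟩
    · exact absurd h hb
    · exact ⟨β, hβ, h⟩
  obtain ⟨γ, ⟨hγ, hγ1⟩, hmin⟩ :=
    Set.exists_min_image _ S.ht (hB.finite.subset (fun x hx => hx.1)) hne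
  rw [hB.rAct_of_not_mem hi, up_image]
  refine ⟨γ, hγ, ?_, ?_⟩
  · rw [inner_refl, alpha_inner_self, hγ1]; norm_num
  · intro β hβ h
    rw [inner_refl, alpha_inner_self] at h
    have hb : ⟪β, S.α i⟫_ℝ = -1 := by linarith
    obtain ⟨γ', hγ', h1, h2⟩ := hn β hβ hb
    have := hmin γ' ⟨hγ', h1⟩
    rw [ht_refl, ht_refl, hγ1, hb]
    linarith

/-! ### Termination -/

variable (S) in
/-- Lexicographic comparison of sets by height: `B` and `C` agree below some height `h`, while
at height `h` the set `C` is strictly contained in `B`. -/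
def LexLt (B C : Set V) : Prop :=
  ∃ h : ℝ, (∀ β, S.ht β ≤ h → β ∈ C → β ∈ B) ∧ (∀ β, S.ht β < h → β ∈ B → β ∈ C) ∧
    ∃ β, S.ht β = h ∧ β ∈ B ∧ β ∉ C

lemma LexLt.irrefl (B : Set V) : ¬ S.LexLt B B := by
  rintro ⟨h, -, -, β, -, h1, h2⟩
  exact h2 h1

lemma LexLt.trans {B C D : Set V} (h₁ : S.LexLt B C) (h₂ : S.LexLt C D) : S.LexLt B D := by
  obtain ⟨h, a1, a2, β, a3, a4, a5⟩ := h₁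
  obtain ⟨k, b1, b2, γ, b3, b4, b5⟩ := h₂
  rcases le_or_gt h k with hk | hk
  · refine ⟨h, fun x hx hxD => a1 x hx (b1 x (hx.trans hk) hxD),
      fun x hx hxB => b2 x (hx.trans_le hk) (a2 x hx hxB), β, a3, a4, fun hD => ?_⟩
    exact a5 (b1 β (a3.le.trans hk) hD)
  · exact ⟨k, fun x hx hxD => a1 x (hx.trans hk.le) (b1 x hx hxD),
      fun x hx hxB => b2 x hx (a2 x (hx.trans hk) hxB), γ, b3,
      a1 γ (b3.le.trans hk.le) b4, b5⟩

lemma Up.lexLt {B : Set V} (hB : S.IsOrthoSet B) {i : Fin S.n} (hup : S.Up i B) :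
    S.LexLt B (S.rAct i B) := by
  have hi := hup.not_mem hB
  obtain ⟨β₁, hβ₁, h1, h2⟩ := hup
  obtain ⟨β, ⟨hβ, hb⟩, hmin⟩ :=
    Set.exists_min_image {β | β ∈ B ∧ ⟪β, S.α i⟫_ℝ = -1} S.ht
      (hB.finite.subset (fun x hx => hx.1)) ⟨β₁, hβ₁, h1⟩
  have hlt : ∀ γ ∈ B, ⟪γ, S.α i⟫_ℝ = 1 → S.ht β < S.ht γ := fun γ hγ h =>
    (hmin β₁ ⟨hβ₁, h1⟩).trans_lt (h2 γ hγ h)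
  refine ⟨S.ht β, ?_, ?_, β, rfl, hβ, ((hB.diff_left hi).2 ⟨hβ, Or.inl hb⟩).2⟩
  · intro x hx hxr
    by_contra hxB
    obtain ⟨γ, hγ, h, rfl⟩ := (hB.diff_right hi).1 ⟨hxr, hxB⟩
    rw [ht_refl] at hx
    rcases h with h | h
    · have := hmin γ ⟨hγ, h⟩
      rw [h] at hx; linarith
    · have := hB.gap hβ hγ hb h (hlt γ hγ h)
      rw [h] at hx; linarith
  · intro x hx hxB
    by_contra hxr
    obtain ⟨-, h | h⟩ := (hB.diff_left hi).1 ⟨hxB, hxr⟩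
    · have := hmin x ⟨hxB, h⟩
      linarith
    · have := hlt x hxB h
      linarith

variable (S) in
/-- Raising terminates, as there are only finitely many sets of positive roots. -/
lemma wf_up : WellFounded (fun C B : {B : Set V // S.IsOrthoSet B} => S.LexLt B.1 C.1) := by
  have hfin : {B : Set V | S.IsOrthoSet B}.Finite :=
    S.finite.finite_subsets.subset (fun B hB => hB.1.trans S.pos_subset)
  have : Finite {B : Set V // S.IsOrthoSet B} := hfin.to_subtype
  have : IsTrans {B : Set V // S.IsOrthoSet B} (fun C B => S.LexLt B.1 C.1) :=
    ⟨fun _ _ _ h1 h2 => LexLt.trans h2 h1⟩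
  have : Std.Irrefl (fun C B : {B : Set V // S.IsOrthoSet B} => S.LexLt B.1 C.1) :=
    ⟨fun B => LexLt.irrefl B.1⟩
  exact Finite.wellFounded_of_trans_of_irrefl _

/-! ### Local confluence -/

/-- If `α i ⟂ α j` and both nodes raise `B`, then `j` still raises `r i · B`, the only
obstruction being a pair `γ, γ + α i + α j` in `B`. -/
lemma IsOrthoSet.square {B : Set V} (hB : S.IsOrthoSet B) {i j : Fin S.n}
    (hij : ⟪S.α i, S.α j⟫_ℝ = 0) (hi : S.Up i B) (hj : S.Up j B) :
    S.Up j (S.refl i '' B) ∨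
      ∃ γ ∈ B, γ + S.α i + S.α j ∈ B ∧ ⟪γ, S.α i⟫_ℝ = -1 := by
  by_contra! hcon
  obtain ⟨hc1, hc2⟩ := hcon
  have hi' := hi.not_mem hB
  obtain ⟨γ, hγ, h1, h2⟩ := hj
  apply hc1
  rw [up_image]
  refine ⟨γ, hγ, ?_, ?_⟩
  · rw [inner_refl, hij, h1]; norm_num
  · intro β hβ h
    rw [inner_refl, hij, mul_zero, sub_zero] at h
    have hgap := hB.gap hγ hβ h1 h (h2 β hβ h)
    rw [ht_refl, ht_refl]
    rcases hB.inner_cases hi' hγ with a | a | a <;>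
    rcases hB.inner_cases hi' hβ with b | b | b <;> rw [a, b] <;> try linarith
    -- What remains: `γ` is raised and `β` is lowered by both nodes.
    by_contra hle
    push Not at hle
    have hβ' := S.pos_subset (hB.1 hβ)
    have hγ' := S.pos_subset (hB.1 hγ)
    have hr1 := S.sub_mem hβ' (S.alpha_mem i) b
    have hr2 := S.sub_mem hr1 (S.alpha_mem j) (by rw [inner_sub_left, hij, h, sub_zero])
    have hort : ⟪β, γ⟫_ℝ = 0 := hB.2 β hβ γ hγ (by rintro rfl; linarith)
    have h3 : ⟪β - S.α i - S.α j, γ⟫_ℝ = 2 := by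
      rw [inner_sub_left, inner_sub_left, hort, real_inner_comm γ (S.α i),
        real_inner_comm γ (S.α j), a, h1]
      norm_num
    rcases S.inner_cases hr2 hγ' with e | e | e | e | e
    · refine hc2 γ hγ ?_ a
      rw [← e]
      convert hβ using 1
      module
    · rw [e, inner_neg_left, S.norm_two γ hγ'] at h3
      norm_num at h3
    all_goals rw [e] at h3; norm_num at h3

/-- The possible pairs of inner products with two adjacent simple roots: `(1, 1)` would force
`α i + α j ∈ B`, which is incompatible with both nodes raising `B`. -/
lemma IsOrthoSet.types {B : Set V} (hB : S.IsOrthoSet B) {i j : Fin S.n}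
    (hij : ⟪S.α i, S.α j⟫_ℝ = -1) (hi : S.Up i B) (hj : S.Up j B) {β : V} (hβ : β ∈ B) :
    (⟪β, S.α i⟫_ℝ = -1 ∧ (⟪β, S.α j⟫_ℝ = 0 ∨ ⟪β, S.α j⟫_ℝ = 1)) ∨
    (⟪β, S.α i⟫_ℝ = 0 ∧ (⟪β, S.α j⟫_ℝ = -1 ∨ ⟪β, S.α j⟫_ℝ = 0 ∨ ⟪β, S.α j⟫_ℝ = 1)) ∨
    (⟪β, S.α i⟫_ℝ = 1 ∧ (⟪β, S.α j⟫_ℝ = -1 ∨ ⟪β, S.α j⟫_ℝ = 0)) := by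
  have hi' := hi.not_mem hB
  have hj' := hj.not_mem hB
  have hβΦ := S.pos_subset (hB.1 hβ)
  have hsum := S.add_mem (S.alpha_mem i) (S.alpha_mem j) hij
  have hsp : S.α i + S.α j ∈ S.Pos :=
    S.pos_of_ht hsum (by rw [map_add, S.ht_alpha, S.ht_alpha]; norm_num)
  have hin : ⟪β, S.α i + S.α j⟫_ℝ = ⟪β, S.α i⟫_ℝ + ⟪β, S.α j⟫_ℝ := inner_add_right _ _ _
  have hno : β ≠ S.α i + S.α j := by
    intro he
    obtain ⟨γ, hγ, h1, h2⟩ := hi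
    have hne : β ≠ γ := by
      rintro rfl
      rw [he, inner_add_left, alpha_inner_self, real_inner_comm (S.α i) (S.α j), hij] at h1
      norm_num at h1
    have hb1 : ⟪β, S.α i⟫_ℝ = 1 := by
      rw [he, inner_add_left, alpha_inner_self, real_inner_comm (S.α i) (S.α j), hij]
      norm_num
    have hlt := h2 β hβ hb1
    have := hB.gap hγ hβ h1 hb1 hlt
    -- `ht β = 2`, so the gap would give `γ` height at most `0`.
    rw [he, map_add, S.ht_alpha, S.ht_alpha] at this
    obtain ⟨n, hn1, hn2, -⟩ := S.ht_pos (hB.1 hγ)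
    have hn1' : (1 : ℝ) ≤ n := by exact_mod_cast hn1
    linarith
  have hsumcases : ⟪β, S.α i⟫_ℝ + ⟪β, S.α j⟫_ℝ = -1 ∨ ⟪β, S.α i⟫_ℝ + ⟪β, S.α j⟫_ℝ = 0 ∨
      ⟪β, S.α i⟫_ℝ + ⟪β, S.α j⟫_ℝ = 1 := by
    rw [← hin]
    rcases S.inner_cases hβΦ hsum with e | e | e
    · exact absurd e hno
    · exact absurd (e ▸ hB.1 hβ) (S.not_pos_and_neg _ hsp)
    · exact e
  rcases hB.inner_cases hi' hβ with a | a | a <;>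
  rcases hB.inner_cases hj' hβ with b | b | b <;> rw [a, b] at hsumcases ⊢ <;>
  first
    | (exfalso; norm_num at hsumcases; done)
    | norm_num

/-- One side of the hexagon: if `α i`, `α j` are adjacent and both nodes raise `B`, then
`B < r i · B < r j r i · B < r i r j r i · B`. -/
lemma IsOrthoSet.hexagon {B : Set V} (hB : S.IsOrthoSet B) {i j : Fin S.n}
    (hij : ⟪S.α i, S.α j⟫_ℝ = -1) (hi : S.Up i B) (hj : S.Up j B) :
    S.Up j (S.refl i '' B) ∧ S.Up i (S.refl j '' (S.refl i '' B)) := by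
  have hji : ⟪S.α j, S.α i⟫_ℝ = -1 := by rw [real_inner_comm, hij]
  have hty : ∀ β ∈ B, _ := fun β hβ => hB.types hij hi hj hβ
  -- Pairings and heights after applying `r i` and `r j r i`, in terms of those before.
  have e1 : ∀ v : V, ⟪S.refl i v, S.α j⟫_ℝ = ⟪v, S.α i⟫_ℝ + ⟪v, S.α j⟫_ℝ := fun v => by
    rw [inner_refl, hij]; ring
  have e2 : ∀ v : V, ⟪S.refl j (S.refl i v), S.α i⟫_ℝ = ⟪v, S.α j⟫_ℝ := fun v => by
    rw [inner_refl, e1, inner_refl, hji, alpha_inner_self]; ring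
  have e3 : ∀ v : V, S.ht (S.refl j (S.refl i v)) =
      S.ht v - 2 * ⟪v, S.α i⟫_ℝ - ⟪v, S.α j⟫_ℝ := fun v => by
    rw [ht_refl, ht_refl, e1]; ring
  have gi : ∀ β ∈ B, ∀ γ ∈ B, ⟪β, S.α i⟫_ℝ = -1 → ⟪γ, S.α i⟫_ℝ = 1 →
      ⟪β, S.α j⟫_ℝ = 0 → ⟪γ, S.α j⟫_ℝ = 0 → S.ht β < S.ht γ → S.ht β + 3 ≤ S.ht γ :=
    fun β hβ γ hγ h1 h2 h3 h4 h => hB.gap3 hij hβ hγ h1 h2 h3 h4 h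
  have gj : ∀ β ∈ B, ∀ γ ∈ B, ⟪β, S.α j⟫_ℝ = -1 → ⟪γ, S.α j⟫_ℝ = 1 →
      ⟪β, S.α i⟫_ℝ = 0 → ⟪γ, S.α i⟫_ℝ = 0 → S.ht β < S.ht γ → S.ht β + 3 ≤ S.ht γ :=
    fun β hβ γ hγ h1 h2 h3 h4 h => hB.gap3 hji hβ hγ h1 h2 h3 h4 h
  have hlt : ∀ β ∈ B, ∀ γ ∈ B, S.ht β < S.ht γ → S.ht β + 1 ≤ S.ht γ :=
    fun β hβ γ hγ h => S.ht_lt (S.pos_subset (hB.1 hβ)) (S.pos_subset (hB.1 hγ)) h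
  -- `types` leaves only two types of lowered members that a witness has to lie below.
  have red1 : ∀ β ∈ B, ⟪β, S.α i⟫_ℝ + ⟪β, S.α j⟫_ℝ = -1 →
      (∀ γ ∈ B, ⟪γ, S.α i⟫_ℝ = 1 → ⟪γ, S.α j⟫_ℝ = 0 →
        S.ht β - ⟪β, S.α i⟫_ℝ < S.ht γ - 1) →
      (∀ γ ∈ B, ⟪γ, S.α i⟫_ℝ = 0 → ⟪γ, S.α j⟫_ℝ = 1 →
        S.ht β - ⟪β, S.α i⟫_ℝ < S.ht γ) → S.Up j (S.refl i '' B) := by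
    intro β hβ hs ha hb
    rw [up_image]
    refine ⟨β, hβ, by rw [e1, hs], ?_⟩
    intro γ hγ hg
    rw [e1] at hg
    rw [ht_refl, ht_refl]
    rcases hty γ hγ with ⟨a, b | b⟩ | ⟨a, b | b | b⟩ | ⟨a, b | b⟩
    case inr.inl.inr.inr => have := hb γ hγ a b; linarith
    case inr.inr.inr => have := ha γ hγ a b; linarith
    all_goals rw [a, b] at hg; norm_num at hg
  have red2 : ∀ β ∈ B, ⟪β, S.α j⟫_ℝ = -1 →
      (∀ γ ∈ B, ⟪γ, S.α i⟫_ℝ = 0 → ⟪γ, S.α j⟫_ℝ = 1 →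
        S.ht β - 2 * ⟪β, S.α i⟫_ℝ + 1 < S.ht γ - 1) →
      (∀ γ ∈ B, ⟪γ, S.α i⟫_ℝ = -1 → ⟪γ, S.α j⟫_ℝ = 1 →
        S.ht β - 2 * ⟪β, S.α i⟫_ℝ + 1 < S.ht γ + 1) →
      S.Up i (S.refl j '' (S.refl i '' B)) := by
    intro β hβ hs ha hb
    rw [up_image]
    refine ⟨S.refl i β, ⟨β, hβ, rfl⟩, by rw [e2, hs], ?_⟩
    rintro _ ⟨γ, hγ, rfl⟩ hg
    rw [e2] at hg
    rw [e3, e3, hs, hg]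
    rcases hty γ hγ with ⟨a, b | b⟩ | ⟨a, b | b | b⟩ | ⟨a, b | b⟩
    case inl.inr => have := hb γ hγ a b; linarith
    case inr.inl.inr.inr => have := ha γ hγ a b; linarith
    all_goals rw [hg] at b; norm_num at b
  obtain ⟨β, hβ, h1, h2⟩ := hi
  obtain ⟨γ, hγ, h3, h4⟩ := hj
  rcases hty β hβ with ⟨-, b | b⟩ | ⟨a, -⟩ | ⟨a, -⟩
  · rcases hty γ hγ with ⟨-, c | c⟩ | ⟨c, -⟩ | ⟨c, -⟩
    · linarith
    · linarith
    · -- `β` of type `(-1, 0)`, `γ` of type `(0, -1)`.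
      have ga : ∀ δ ∈ B, ⟪δ, S.α i⟫_ℝ = 1 → ⟪δ, S.α j⟫_ℝ = 0 → S.ht β + 3 ≤ S.ht δ :=
        fun δ hδ ha hb => gi β hβ δ hδ h1 ha b hb (h2 δ hδ ha)
      refine ⟨?_, red2 γ hγ h3 ?_ ?_⟩
      · rcases le_total (S.ht β + 1) (S.ht γ) with hle | hle
        · refine red1 β hβ (by rw [h1, b]; norm_num) ?_ ?_ <;> intro δ hδ ha hb
          · have := ga δ hδ ha hb
            rw [h1]; linarith
          · have := h4 δ hδ hb
            rw [h1]; linarith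
        · refine red1 γ hγ (by rw [h3, c]; norm_num) ?_ ?_ <;> intro δ hδ ha hb
          · have := ga δ hδ ha hb
            rw [c]; linarith
          · have := h4 δ hδ hb
            rw [c]; linarith
      · intro δ hδ ha hb
        have := gj γ hγ δ hδ h3 hb c ha (h4 δ hδ hb)
        rw [c]; linarith
      · intro δ hδ ha hb
        have := h4 δ hδ hb
        rw [c]; linarith
    · -- `β` of type `(-1, 0)`, `γ` of type `(1, -1)`, hence `ht β < ht γ`.
      have hbg := hlt β hβ γ hγ (h2 γ hγ c)
      refine ⟨red1 β hβ (by rw [h1, b]; norm_num) ?_ ?_, red2 γ hγ h3 ?_ ?_⟩ <;>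
        intro δ hδ ha hb
      · have := gi β hβ δ hδ h1 ha b hb (h2 δ hδ ha)
        rw [h1]; linarith
      · have := h4 δ hδ hb
        rw [h1]; linarith
      · have := h4 δ hδ hb
        rw [c]; linarith
      · have := h4 δ hδ hb
        rw [c]; linarith
  · rcases hty γ hγ with ⟨-, c | c⟩ | ⟨c, -⟩ | ⟨c, -⟩
    · linarith
    · linarith
    · -- `β` of type `(-1, 1)`, `γ` of type `(0, -1)`, hence `ht γ < ht β`.
      have hbg := hlt γ hγ β hβ (h4 β hβ b)
      refine ⟨red1 γ hγ (by rw [h3, c]; norm_num) ?_ ?_, red2 γ hγ h3 ?_ ?_⟩ <;>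
        intro δ hδ ha hb
      · have := hlt β hβ δ hδ (h2 δ hδ ha)
        rw [c]; linarith
      · have := h4 δ hδ hb
        rw [c]; linarith
      · have := gj γ hγ δ hδ h3 hb c ha (h4 δ hδ hb)
        rw [c]; linarith
      · have := h4 δ hδ hb
        rw [c]; linarith
    · have u1 := h2 γ hγ c
      have u2 := h4 β hβ b
      linarith
  · linarith
  · linarith

/-! ### Ascending paths -/

variable (S) in
/-- `S.Asc n B C`: there is a chain of `n` raising reflections from `B` to `C`. -/
inductive Asc : ℕ → Set V → Set V → Prop
  | nil (B : Set V) : Asc 0 B B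
  | cons {n : ℕ} {i : Fin S.n} {B C : Set V} (h : S.Up i B) (p : Asc n (S.rAct i B) C) :
      Asc (n + 1) B C

lemma Asc.trans {n m : ℕ} {B C D : Set V} (p : S.Asc n B C) (q : S.Asc m C D) :
    S.Asc (n + m) B D := by
  induction p with
  | nil => simpa using q
  | cons h _ ih =>
    rw [Nat.add_right_comm]
    exact Asc.cons h (ih q)

lemma Asc.mem {𝓑 : Set (Set V)} (hcl : ∀ B ∈ 𝓑, ∀ i, S.rAct i B ∈ 𝓑) {n : ℕ} {B C : Set V}
    (p : S.Asc n B C) (hB : B ∈ 𝓑) : C ∈ 𝓑 := by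
  induction p with
  | nil => exact hB
  | cons _ _ ih => exact ih (hcl _ hB _)

lemma exists_asc {B : Set V} (hB : S.IsOrthoSet B) :
    ∃ n T, S.Asc n B T ∧ ∀ i, ¬ S.Up i T := by
  have key : ∀ B : {B : Set V // S.IsOrthoSet B},
      ∃ n T, S.Asc n B.1 T ∧ ∀ i, ¬ S.Up i T := by
    intro B
    induction B using S.wf_up.induction with
    | _ B ih =>
      by_cases h : ∃ i, S.Up i B.1
      · obtain ⟨i, hi⟩ := h
        obtain ⟨n, T, p, hT⟩ := ih ⟨_, B.2.rAct i⟩ (hi.lexLt B.2)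
        exact ⟨n + 1, T, Asc.cons hi p, hT⟩
      · push Not at h
        exact ⟨0, B.1, Asc.nil _, h⟩
  exact key ⟨B, hB⟩

/-- Two raising reflections can be completed to a common upper bound by ascending paths of
equal length: `0` or `1` for orthogonal nodes, `2` for adjacent ones. -/
lemma diamond {𝓑 : Set (Set V)} (hadm : S.Admissible 𝓑)
    (hcl : ∀ B ∈ 𝓑, ∀ i, S.rAct i B ∈ 𝓑) {B : Set V} (hB : S.IsOrthoSet B) (hBm : B ∈ 𝓑)
    {i j : Fin S.n} (hi : S.Up i B) (hj : S.Up j B) :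
    ∃ k D, S.Asc k (S.rAct i B) D ∧ S.Asc k (S.rAct j B) D := by
  have ri := hB.rAct_of_not_mem (hi.not_mem hB)
  have rj := hB.rAct_of_not_mem (hj.not_mem hB)
  rcases S.simple_inner i j with h | h | h
  · refine ⟨0, S.rAct i B, Asc.nil _, ?_⟩
    have : S.rAct j B = S.rAct i B := by simp only [SLRS.rAct, SLRS.refl, h]
    rw [this]
    exact Asc.nil _
  · have hji : ⟪S.α j, S.α i⟫_ℝ = -1 := by rw [real_inner_comm, h]
    obtain ⟨a1, a2⟩ := hB.hexagon h hi hj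
    obtain ⟨b1, b2⟩ := hB.hexagon hji hj hi
    rw [← ri] at a1 a2
    rw [← rj] at b1 b2
    have oi := hB.rAct i
    have oj := hB.rAct j
    rw [← oi.rAct_of_not_mem (a1.not_mem oi)] at a2
    rw [← oj.rAct_of_not_mem (b1.not_mem oj)] at b2
    have oji := oi.rAct j
    have oij := oj.rAct i
    refine ⟨2, _, Asc.cons a1 (Asc.cons a2 (Asc.nil _)), ?_⟩
    have he : S.rAct i (S.rAct j (S.rAct i B)) = S.rAct j (S.rAct i (S.rAct j B)) := by
      rw [oji.rAct_of_not_mem (a2.not_mem oji), oi.rAct_of_not_mem (a1.not_mem oi), ri,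
        oij.rAct_of_not_mem (b2.not_mem oij), oj.rAct_of_not_mem (b1.not_mem oj), rj]
      simp only [Set.image_image]
      exact Set.image_congr (fun v _ => S.refl_braid h v)
    rw [he]
    exact Asc.cons b1 (Asc.cons b2 (Asc.nil _))
  · have hji : ⟪S.α j, S.α i⟫_ℝ = 0 := by rw [real_inner_comm, h]
    -- If `γ` and `γ + α i + α j` lie in `B`, admissibility of `r i · B` gives `r i · B = r j · B`.
    have key : ∀ i j : Fin S.n, ⟪S.α i, S.α j⟫_ℝ = 0 → S.Up i B →
        (∃ γ ∈ B, γ + S.α i + S.α j ∈ B ∧ ⟪γ, S.α i⟫_ℝ = -1) →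
        S.rAct i B = S.rAct j B := by
      rintro i j h hi ⟨γ, hγ, hγ', hγi⟩
      have hij : i ≠ j := by
        rintro rfl
        rw [alpha_inner_self] at h
        norm_num at h
      have hnadj : ¬ S.adj i j := by
        unfold adj
        rw [h]
        norm_num
      have hji : ⟪S.α j, S.α i⟫_ℝ = 0 := by rw [real_inner_comm, h]
      have m1 : γ + S.α i ∈ S.rAct i B := by
        rw [hB.rAct_of_not_mem (hi.not_mem hB)]
        refine ⟨γ, hγ, ?_⟩
        rw [refl_apply, hγi]
        module
      have m2 : γ + S.α i - S.α i + S.α j ∈ S.rAct i B := by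
        rw [hB.rAct_of_not_mem (hi.not_mem hB)]
        refine ⟨_, hγ', ?_⟩
        rw [refl_apply, inner_add_left, inner_add_left, hγi, alpha_inner_self, hji]
        module
      have := hadm.2 _ (hcl B hBm i) i j hij hnadj ⟨_, m1, m2⟩
      rw [hB.rAct_rAct] at this
      have h2 := congrArg (S.rAct j) this
      rw [(hB.rAct i).rAct_rAct] at h2
      exact h2.symm
    by_cases heq : S.rAct i B = S.rAct j B
    · exact ⟨0, S.rAct i B, Asc.nil _, heq ▸ Asc.nil _⟩
    have a1 : S.Up j (S.rAct i B) := by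
      rcases hB.square h hi hj with h' | h'
      · rwa [ri]
      · exact absurd (key i j h hi h') heq
    have b1 : S.Up i (S.rAct j B) := by
      rcases hB.square hji hj hi with h' | h'
      · rwa [rj]
      · exact absurd (key j i hji hj h').symm heq
    refine ⟨1, _, Asc.cons a1 (Asc.nil _), ?_⟩
    have oi := hB.rAct i
    have oj := hB.rAct j
    have he : S.rAct j (S.rAct i B) = S.rAct i (S.rAct j B) := by
      rw [oi.rAct_of_not_mem (a1.not_mem oi), ri, oj.rAct_of_not_mem (b1.not_mem oj), rj]
      simp only [Set.image_image]
      exact Set.image_congr (fun v _ => S.refl_comm hji v)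
    rw [he]
    exact Asc.cons b1 (Asc.nil _)

/-- Newman's argument, keeping track of lengths: all maximal ascending paths from `B` have the
same end point and the same length. -/
lemma asc_unique {𝓑 : Set (Set V)} (hadm : S.Admissible 𝓑)
    (hcl : ∀ B ∈ 𝓑, ∀ i, S.rAct i B ∈ 𝓑) {B : Set V} (hB : S.IsOrthoSet B) (hBm : B ∈ 𝓑)
    {n m : ℕ} {T T' : Set V} (p : S.Asc n B T) (q : S.Asc m B T')
    (hT : ∀ i, ¬ S.Up i T) (hT' : ∀ i, ¬ S.Up i T') : n = m ∧ T = T' := by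
  have key : ∀ B : {B : Set V // S.IsOrthoSet B}, B.1 ∈ 𝓑 →
      ∀ n m T T', S.Asc n B.1 T → S.Asc m B.1 T' → (∀ i, ¬ S.Up i T) →
      (∀ i, ¬ S.Up i T') → n = m ∧ T = T' := by
    intro B
    induction B using S.wf_up.induction with
    | _ B ih =>
      obtain ⟨B, hB⟩ := B
      intro hBm n m T T' p q hT hT'
      dsimp only at *
      cases p with
      | nil =>
        cases q with
        | nil => exact ⟨rfl, rfl⟩
        | cons h _ => exact absurd h (hT _)
      | cons hi p =>
        cases q with
        | nil => exact absurd hi (hT' _)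
        | cons hj q =>
          obtain ⟨k, D, pi, pj⟩ := diamond hadm hcl hB hBm hi hj
          have hD : S.IsOrthoSet D := pi.mem (𝓑 := {B | S.IsOrthoSet B})
            (fun B hB i => IsOrthoSet.rAct hB i) (hB.rAct _)
          obtain ⟨l, E, r, hE⟩ := exists_asc hD
          obtain ⟨u1, u2⟩ := ih ⟨_, hB.rAct _⟩ (hi.lexLt hB) (hcl B hBm _) _ _ _ _ p
            (pi.trans r) hT hE
          obtain ⟨v1, v2⟩ := ih ⟨_, hB.rAct _⟩ (hj.lexLt hB) (hcl B hBm _) _ _ _ _ q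
            (pj.trans r) hT' hE
          exact ⟨by omega, u2.trans v2.symm⟩
  exact key ⟨B, hB⟩ hBm n m T T' p q hT hT'

/-! ### The rank function and minimal words -/

lemma orbit_closed {𝓑 : Set (Set V)} (h : S.IsOrbit 𝓑) :
    ∀ B ∈ 𝓑, ∀ i, S.rAct i B ∈ 𝓑 := by
  obtain ⟨X, -, rfl⟩ := h
  intro B hB i
  exact Relation.ReflTransGen.tail hB ⟨i, rfl⟩

lemma orbit_ortho {𝓑 : Set (Set V)} (h : S.IsOrbit 𝓑) : ∀ B ∈ 𝓑, S.IsOrthoSet B := by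
  obtain ⟨X, hX, rfl⟩ := h
  intro B hB
  induction hB with
  | refl => exact hX
  | tail _ h ih =>
    obtain ⟨i, rfl⟩ := h
    exact ih.rAct i

/-- Every member of the orbit reaches `B₀` by an ascending path: by confluence the terminal
set is constant along edges, and `B₀` itself is terminal. -/
lemma exists_asc_max {𝓑 : Set (Set V)} (hadm : S.Admissible 𝓑) {B₀ : Set V} (hB₀ : B₀ ∈ 𝓑)
    (hmax : ∀ i, ¬ S.Up i B₀) {B : Set V} (hB : B ∈ 𝓑) : ∃ n, S.Asc n B B₀ := by
  have hcl := orbit_closed hadm.1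
  have hor := orbit_ortho hadm.1
  -- Ascending to a fixed terminal set `T` is invariant under the fundamental reflections.
  have edge : ∀ T, (∀ i, ¬ S.Up i T) → ∀ C ∈ 𝓑, ∀ i, (∃ n, S.Asc n C T) →
      ∃ n, S.Asc n (S.rAct i C) T := by
    rintro T hT C hC i ⟨n, p⟩
    rcases (hor C hC).trichotomy i with h | h | h
    · exact ⟨n, h.symm ▸ p⟩
    · obtain ⟨m, T', q, hT'⟩ := exists_asc ((hor C hC).rAct i)
      obtain ⟨-, rfl⟩ := asc_unique hadm hcl (hor C hC) hC p (Asc.cons h q) hT hT'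
      exact ⟨m, q⟩
    · refine ⟨n + 1, Asc.cons h ?_⟩
      rwa [(hor C hC).rAct_rAct]
  obtain ⟨X, hX, rfl⟩ := hadm.1
  obtain ⟨n, T, p, hT⟩ := exists_asc hX
  have all : ∀ C ∈ S.orbitOf X, ∃ n, S.Asc n C T := by
    intro C hC
    induction hC with
    | refl => exact ⟨n, p⟩
    | tail h1 h ih =>
      obtain ⟨i, rfl⟩ := h
      exact edge T hT _ h1 i ih
  obtain ⟨m, q⟩ := all B₀ hB₀
  obtain ⟨-, rfl⟩ := asc_unique hadm hcl (hor _ hB₀) hB₀ q (Asc.nil _) hT hmax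
  exact all B hB

/-- An ascending path from `B` to `B₀`, read backwards, is a word carrying `B₀` to `B`. -/
lemma Asc.word {n : ℕ} {B B₀ : Set V} (p : S.Asc n B B₀) (hB : S.IsOrthoSet B)
    (hB₀ : S.IsOrthoSet B₀) :
    ∃ l : List (Fin S.n), l.length = n ∧ S.wAct (S.wordMap l) B₀ = B := by
  induction p with
  | nil => exact ⟨[], rfl, S.mapSet_id hB.1⟩
  | @cons n i B C h p ih =>
    obtain ⟨l, hl, he⟩ := ih (hB.rAct i) hB₀
    refine ⟨i :: l, by simp [hl], ?_⟩
    rw [S.wAct_cons hB₀.1, he, hB.rAct_rAct]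

lemma len_le (l : List (Fin S.n)) : S.len (S.wordMap l) ≤ l.length :=
  Nat.sInf_le ⟨l, rfl, rfl⟩

lemma exists_word {w : V → V} (hw : S.InW w) :
    ∃ l : List (Fin S.n), l.length = S.len w ∧ S.wordMap l = w := by
  obtain ⟨l, hl⟩ := hw
  exact Nat.sInf_mem (s := {k | ∃ l : List (Fin S.n), l.length = k ∧ S.wordMap l = w})
    ⟨_, l, rfl, hl⟩

end basic

end SLRS

/-- Lemma 3.8: let `B₀` be the unique maximal element of an
admissible orbit `𝓑` and `B ∈ 𝓑`. (i) If `w` is of minimal length with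
`w · B₀ = B` and `ℓ(r i * w) < ℓ(w)`, then `r i · B > B`. (ii) If `w, w'` are
both of minimal length with `w · B₀ = w' · B₀ = B`, then `ℓ(w) = ℓ(w')`, and
for each node `i` with `r i · B > B` there is `w''` of length `ℓ(w)` with
`w'' · B₀ = B` and `ℓ(r i * w'') < ℓ(w'')`. -/
theorem minimal_word_props (S : SLRS V) (𝓑 : Set (Set V))
    (hadm : S.Admissible 𝓑) (B₀ : Set V) (hB₀ : B₀ ∈ 𝓑)
    (hmax : ∀ C ∈ 𝓑, ¬ S.lt B₀ C)
    (huniq : ∀ C ∈ 𝓑, (∀ D ∈ 𝓑, ¬ S.lt C D) → C = B₀)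
    (B : Set V) (hB : B ∈ 𝓑) :
    (∀ w, S.InW w → S.wAct w B₀ = B →
      (∀ u, S.InW u → S.wAct u B₀ = B → S.len w ≤ S.len u) →
      ∀ i : Fin S.n, S.len (S.refl i ∘ w) < S.len w → S.lt B (S.rAct i B)) ∧
    (∀ w w', S.InW w → S.wAct w B₀ = B →
      (∀ u, S.InW u → S.wAct u B₀ = B → S.len w ≤ S.len u) →
      S.InW w' → S.wAct w' B₀ = B →
      (∀ u, S.InW u → S.wAct u B₀ = B → S.len w' ≤ S.len u) →
      S.len w = S.len w' ∧
      ∀ i : Fin S.n, S.lt B (S.rAct i B) →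
        ∃ w'', S.InW w'' ∧ S.len w'' = S.len w ∧ S.wAct w'' B₀ = B ∧
          S.len (S.refl i ∘ w'') < S.len w'') := by
  have hcl := orbit_closed hadm.1
  have hor := orbit_ortho hadm.1
  have hB₀o := hor B₀ hB₀
  have hnorm : ∀ i, ¬ S.Up i B₀ := fun i h =>
    hmax _ (hcl B₀ hB₀ i) ((hB₀o.lt_iff i).2 h)
  choose! ρ hρ using fun (C : Set V) (hC : C ∈ 𝓑) => exists_asc_max hadm hB₀ hnorm hC
  have ρ_eq : ∀ C ∈ 𝓑, ∀ n, S.Asc n C B₀ → ρ C = n := fun C hC n p =>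
    (asc_unique hadm hcl (hor C hC) hC (hρ C hC) p hnorm hnorm).1
  have ρ_up : ∀ C ∈ 𝓑, ∀ i, S.Up i C → ρ C = ρ (S.rAct i C) + 1 := fun C hC i h =>
    ρ_eq C hC _ (Asc.cons h (hρ _ (hcl C hC i)))
  have ρ_down : ∀ C ∈ 𝓑, ∀ i, S.Up i (S.rAct i C) → ρ (S.rAct i C) = ρ C + 1 := by
    intro C hC i h
    have := ρ_up _ (hcl C hC i) i h
    rwa [(hor C hC).rAct_rAct] at this
  have ρ_step : ∀ C ∈ 𝓑, ∀ i, ρ (S.rAct i C) ≤ ρ C + 1 := by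
    intro C hC i
    rcases (hor C hC).trichotomy i with h | h | h
    · rw [h]; omega
    · have := ρ_up C hC i h; omega
    · exact (ρ_down C hC i h).le
  -- The rank changes by at most one along an edge, so it bounds word lengths from below.
  have word_bd : ∀ l : List (Fin S.n), S.wAct (S.wordMap l) B₀ ∈ 𝓑 ∧
      ρ (S.wAct (S.wordMap l) B₀) ≤ l.length := by
    intro l
    induction l with
    | nil =>
      have h0 : S.wAct (S.wordMap []) B₀ = B₀ := S.mapSet_id hB₀o.1
      rw [h0, ρ_eq B₀ hB₀ 0 (Asc.nil _)]
      exact ⟨hB₀, le_rfl⟩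
    | cons i l ih =>
      rw [S.wAct_cons hB₀o.1]
      refine ⟨hcl _ ih.1 i, ?_⟩
      have := ρ_step _ ih.1 i
      rw [List.length_cons]
      omega
  have len_bd : ∀ u, S.InW u → ρ (S.wAct u B₀) ≤ S.len u := by
    intro u hu
    obtain ⟨l, hl, rfl⟩ := exists_word hu
    rw [← hl]
    exact (word_bd l).2
  have len_min : ∀ w, S.InW w → S.wAct w B₀ = B →
      (∀ u, S.InW u → S.wAct u B₀ = B → S.len w ≤ S.len u) → S.len w = ρ B := by
    intro w hw hwB hmin
    obtain ⟨l, hl, he⟩ := (hρ B hB).word (hor B hB) hB₀o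
    have h1 := hmin _ ⟨l, rfl⟩ he
    have h2 := len_le (S := S) l
    have h3 := len_bd w hw
    rw [hwB] at h3
    omega
  refine ⟨?_, ?_⟩
  · intro w hw hwB hmin i hlen
    have hw' := len_min w hw hwB hmin
    obtain ⟨l, rfl⟩ := hw
    have h1 := len_bd _ ⟨i :: l, S.wordMap_cons i l⟩
    rw [← wordMap_cons, S.wAct_cons hB₀o.1, hwB] at h1
    rw [← wordMap_cons] at hlen
    rw [(hor B hB).lt_iff]
    rcases (hor B hB).trichotomy i with h | h | h
    · rw [h] at h1; omega
    · exact h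
    · have := ρ_down B hB i h; omega
  · intro w w' hw hwB hmin hw' hwB' hmin'
    have e := len_min w hw hwB hmin
    refine ⟨e.trans (len_min w' hw' hwB' hmin').symm, ?_⟩
    intro i hlt
    rw [(hor B hB).lt_iff] at hlt
    have hr := ρ_up B hB i hlt
    have hm := hcl B hB i
    obtain ⟨l, hl, he⟩ := (hρ _ hm).word (hor _ hm) hB₀o
    have hact : S.wAct (S.wordMap (i :: l)) B₀ = B := by
      rw [S.wAct_cons hB₀o.1, he, (hor B hB).rAct_rAct]
    have h1 := len_le (S := S) (i :: l)
    have h2 := len_bd _ ⟨i :: l, rfl⟩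
    rw [hact] at h2
    rw [List.length_cons] at h1
    have hback : S.refl i ∘ S.wordMap (i :: l) = S.wordMap l := by
      funext v
      exact S.refl_refl i _
    have h3 := len_le (S := S) l
    refine ⟨S.wordMap (i :: l), ⟨_, rfl⟩, by omega, hact, ?_⟩
    rw [hback]
    omega
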